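/- There is an absolute constant C > 0 such that the following holds. Let d ≥ 10 and T ≥ 1. Let σ₁, …, σ_T be i.i.d. uniformly random transpositions in the symmetric group S_d, and let ξ₁, …, ξ_T be i.i.d. Bernoulli(1/2) random variables independent of everything. For a fixed sequence σ = (σ₁,…,σ_T), let μ_σ denote the law (over the randomness of the ξ_i) of the product P_σ = σ₁^{ξ₁} ⋯ σ_T^{ξ_T}. Then E_σ[ TV(μ_σ, Unif_{S_d}) ] ≤ C ( d^{1/2} e^{−T/(6d)} + (d!)^{1/2} ((√5 − 1)/2)^{T/2} ), where TV denotes total variation distance and Unif_{S_d} is the uniform distribution on S_d. -/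

import Mathlib

noncomputable section

open scoped Classical

namespace KacJL

/-- The product `σ₁^{ξ₁} ⋯ σ_T^{ξ_T}`. -/
def permProd {d T : ℕ} (σ : Fin T → Equiv.Perm (Fin d)) (ξ : Fin T → Bool) :
    Equiv.Perm (Fin d) :=
  (List.ofFn fun t => if ξ t then σ t else 1).prod

/-- For a fixed sequence `σ` of permutations, the probability that
`σ₁^{ξ₁} ⋯ σ_T^{ξ_T} = τ` over i.i.d. Bernoulli(1/2) exponents `ξ`. -/
def permProdPMF {d T : ℕ} (σ : Fin T → Equiv.Perm (Fin d)) (τ : Equiv.Perm (Fin d)) : ℝ :=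
  ((Finset.univ.filter fun ξ : Fin T → Bool => permProd σ ξ = τ).card : ℝ) / 2 ^ T

/-- The total variation distance (in the normalization `TV(μ,ν) = ∑ x |μ(x) - ν(x)|`)
between the law of `σ₁^{ξ₁} ⋯ σ_T^{ξ_T}` and the uniform distribution on `S_d`. -/
def tvToUniform {d T : ℕ} (σ : Fin T → Equiv.Perm (Fin d)) : ℝ :=
  ∑ τ : Equiv.Perm (Fin d), |permProdPMF σ τ - ((d.factorial : ℝ))⁻¹|

/-- The expectation over i.i.d. uniformly random transpositions `σ₁, …, σ_T` of the total
variation distance `TV(μ_σ, Unif_{S_d})`. -/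
def avgTV (d T : ℕ) : ℝ :=
  (∑ σ : Fin T → {τ : Equiv.Perm (Fin d) // τ.IsSwap},
      tvToUniform fun t => (σ t : Equiv.Perm (Fin d))) /
    (Fintype.card {τ : Equiv.Perm (Fin d) // τ.IsSwap}) ^ T

section helpers

open Equiv Finset


section abstractRep

variable {d : ℕ} {H : Type*} [NormedAddCommGroup H] [InnerProductSpace ℝ H]

/-- Permutations supported in `A`. -/
def symF (A : Finset (Fin d)) : Finset (Perm (Fin d)) :=
  Finset.univ.filter fun s => ∀ i, i ∉ A → s i = i

lemma mem_symF {A : Finset (Fin d)} {s : Perm (Fin d)} :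
    s ∈ symF A ↔ ∀ i, i ∉ A → s i = i := by simp [symF]

/-- The (unnormalized) symmetrizer. -/
def eA (R : Perm (Fin d) →* (H →ₗ[ℝ] H)) (A : Finset (Fin d)) : H →ₗ[ℝ] H :=
  ∑ s ∈ symF A, R s

/-- Sum over ordered pairs of the transpositions in `N`. -/
def DD (R : Perm (Fin d) →* (H →ₗ[ℝ] H)) (N : Finset (Fin d)) : H →ₗ[ℝ] H :=
  ∑ i ∈ N, ∑ j ∈ N, R (swap i j)

variable (R : Perm (Fin d) →* (H →ₗ[ℝ] H))

lemma eA_apply (A : Finset (Fin d)) (f : H) : eA R A f = ∑ s ∈ symF A, R s f := by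
  simp [eA]

lemma DD_apply (A : Finset (Fin d)) (f : H) :
    DD R A f = ∑ i ∈ A, ∑ j ∈ A, R (swap i j) f := by
  simp [DD]

lemma symF_apply_mem {A : Finset (Fin d)} {s : Perm (Fin d)} (hs : s ∈ symF A) {i : Fin d}
    (hi : i ∈ A) : s i ∈ A := by
  by_contra h
  have := mem_symF.1 hs _ h
  exact h (by rw [s.injective this]; exact hi)

lemma symF_empty : symF (∅ : Finset (Fin d)) = {1} := by
  ext s
  simp [mem_symF, Equiv.ext_iff]

lemma symF_singleton (i : Fin d) : symF ({i} : Finset (Fin d)) = {1} := by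
  ext s
  constructor
  · intro h
    have h1 := symF_apply_mem h (Finset.mem_singleton_self i)
    rw [Finset.mem_singleton] at h1 ⊢
    ext j
    by_cases hj : j = i
    · subst hj; simp [h1]
    · rw [mem_symF.1 h j (by simpa using hj)]; rfl
  · intro h
    simp at h
    subst h
    simp [mem_symF]

lemma eA_empty (f : H) : eA R ∅ f = f := by simp [eA_apply, symF_empty]

lemma eA_singleton (i : Fin d) (f : H) : eA R {i} f = f := by simp [eA_apply, symF_singleton]

lemma eA_insert {A : Finset (Fin d)} {j : Fin d} (hj : j ∉ A) (f : H) :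
    eA R (insert j A) f = eA R A f + ∑ i ∈ A, R (swap i j) (eA R A f) := by
  have h1 : eA R (insert j A) f = ∑ i ∈ insert j A, R (swap i j) (eA R A f) := by
    rw [eA_apply, ← Finset.sum_fiberwise_of_maps_to (g := fun s : Perm (Fin d) => s j)
      (t := insert j A) (fun s hs => symF_apply_mem hs (Finset.mem_insert_self j A))]
    refine Finset.sum_congr rfl fun i hi => ?_
    rw [eA_apply, map_sum]
    refine Finset.sum_bij' (fun s _ => swap i j * s) (fun s _ => swap i j * s) ?_ ?_ ?_ ?_ ?_
    · intro s hs
      rw [Finset.mem_filter] at hs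
      rw [mem_symF]
      intro k hk
      by_cases hkj : k = j
      · subst hkj; simp [hs.2]
      · have hk2 : k ∉ insert j A := by simp [hkj, hk]
        rw [Perm.mul_apply, mem_symF.1 hs.1 k hk2, swap_apply_of_ne_of_ne _ hkj]
        rintro rfl; exact hk2 hi
    · intro s hs
      rw [Finset.mem_filter, mem_symF]
      refine ⟨?_, ?_⟩
      · intro k hk
        have hk' : k ∉ A := fun h => hk (Finset.mem_insert_of_mem h)
        rw [Perm.mul_apply, mem_symF.1 hs k hk', swap_apply_of_ne_of_ne]
        · rintro rfl; exact hk hi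
        · rintro rfl; exact hk (Finset.mem_insert_self _ _)
      · simp [mem_symF.1 hs j hj]
    · intro s _; simp
    · intro s _; simp
    · intro s _
      rw [← Module.End.mul_apply, ← map_mul]; simp
  rw [h1, Finset.sum_insert hj, swap_self, show (Equiv.refl (Fin d)) = (1 : Perm (Fin d)) from rfl,
    map_one]
  rfl

lemma eA_mono {A B : Finset (Fin d)} (h : A ⊆ B) (f : H) (hf : eA R A f = 0) :
    eA R B f = 0 := by
  have key : ∀ C : Finset (Fin d), eA R (A ∪ C) f = 0 := by
    intro C
    induction C using Finset.induction_on with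
    | empty => simpa using hf
    | insert j C hj ih =>
      rw [Finset.union_insert]
      by_cases hjA : j ∈ A ∪ C
      · rwa [Finset.insert_eq_of_mem hjA]
      · rw [eA_insert R hjA, ih]; simp
  simpa [Finset.union_eq_right.2 h] using key B

lemma R_eA {A : Finset (Fin d)} {t : Perm (Fin d)} (ht : t ∈ symF A) (f : H) :
    R t (eA R A f) = eA R A f := by
  rw [eA_apply, map_sum]
  refine Finset.sum_bij' (fun s _ => t * s) (fun s _ => t⁻¹ * s) ?_ ?_ ?_ ?_ ?_
  · intro s hs
    rw [mem_symF] at *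
    intro i hi
    rw [Perm.mul_apply, hs i hi, ht i hi]
  · intro s hs
    rw [mem_symF] at *
    intro i hi
    rw [Perm.mul_apply, hs i hi, Perm.inv_eq_iff_eq, ht i hi]
  · intro s _; simp
  · intro s _; simp
  · intro s _; rw [map_mul]; rfl

lemma swap_mem_symF {A : Finset (Fin d)} {i j : Fin d} (hi : i ∈ A) (hj : j ∈ A) :
    swap i j ∈ symF A := by
  rw [mem_symF]
  intro k hk
  apply swap_apply_of_ne_of_ne
  · rintro rfl; exact hk hi
  · rintro rfl; exact hk hj

lemma eA_comm {A B : Finset (Fin d)} (h : Disjoint A B) (f : H) :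
    eA R A (eA R B f) = eA R B (eA R A f) := by
  simp only [eA_apply, map_sum]
  rw [Finset.sum_comm]
  refine Finset.sum_congr rfl fun s hs => Finset.sum_congr rfl fun t ht => ?_
  rw [← Module.End.mul_apply, ← map_mul, ← Module.End.mul_apply, ← map_mul]
  have : Perm.Disjoint s t := by
    intro x
    by_cases hx : x ∈ A
    · right; exact mem_symF.1 ht x (fun h' => Finset.disjoint_left.1 h hx h')
    · left; exact mem_symF.1 hs x hx
  rw [this.commute.eq]

lemma DD_R {N : Finset (Fin d)} {t : Perm (Fin d)} (ht : t ∈ symF N) (f : H) :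
    DD R N (R t f) = R t (DD R N f) := by
  simp only [DD_apply, map_sum]
  symm
  have hb : ∀ g : Fin d → H, ∑ i ∈ N, g (t i) = ∑ i ∈ N, g i := by
    intro g
    refine Finset.sum_bij (fun i _ => t i) (fun i hi => symF_apply_mem ht hi)
      (fun i _ j _ h => t.injective h) ?_ (fun i _ => rfl)
    intro i hi
    refine ⟨t⁻¹ i, ?_, by simp⟩
    by_contra h
    have h2 := mem_symF.1 ht _ h
    have h3 : t (t⁻¹ i) = i := by simp
    rw [h3] at h2
    rw [← h2] at h
    exact h hi
  rw [← hb (fun i => ∑ j ∈ N, R (swap i j) (R t f))]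
  refine Finset.sum_congr rfl fun i _ => ?_
  rw [← hb (fun j => R (swap (t i) j) (R t f))]
  refine Finset.sum_congr rfl fun j _ => ?_
  rw [← Module.End.mul_apply, ← map_mul, ← Module.End.mul_apply, ← map_mul,
    Equiv.mul_swap_eq_swap_mul]

lemma DD_eA {A N : Finset (Fin d)} (h : A ⊆ N) (f : H) :
    DD R N (eA R A f) = eA R A (DD R N f) := by
  simp only [eA_apply, map_sum]
  refine Finset.sum_congr rfl fun s hs => DD_R R ?_ f
  rw [mem_symF] at *
  exact fun i hi => hs i (fun h' => hi (h h'))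

lemma DD_split {A N : Finset (Fin d)} (h : A ⊆ N) (f : H)
    (hA : ∀ j ∈ N \ A, eA R (insert j A) f = 0) :
    DD R N (eA R A f) = ((A.card : ℝ) ^ 2 - 2 * (N \ A).card) • eA R A f
      + DD R (N \ A) (eA R A f) := by
  set g := eA R A f with hg
  have hcross : ∀ j ∈ N \ A, ∑ i ∈ A, R (swap i j) g = - g := by
    intro j hj
    have h1 := hA j hj
    rw [eA_insert R (Finset.mem_sdiff.1 hj).2] at h1
    rw [eq_neg_iff_add_eq_zero, add_comm]; exact h1
  have hAA : ∑ i ∈ A, ∑ j ∈ A, R (swap i j) g = ((A.card : ℝ) ^ 2) • g := by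
    rw [Finset.sum_congr rfl fun i hi => Finset.sum_congr rfl fun j hj =>
      R_eA R (swap_mem_symF hi hj) f]
    simp only [Finset.sum_const, ← hg, ← Nat.cast_smul_eq_nsmul ℝ, smul_smul, sq]
  have hs : ∀ g : Fin d → H, ∑ i ∈ N, g i = ∑ i ∈ N \ A, g i + ∑ i ∈ A, g i := by
    intro g; rw [Finset.sum_sdiff h]
  have hc2 : ∑ j ∈ N \ A, ∑ i ∈ A, R (swap j i) g = - ((N \ A).card : ℝ) • g := by
    rw [Finset.sum_congr rfl fun j hj => ((Finset.sum_congr rfl fun i _ => by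
      rw [swap_comm]).trans (hcross j hj))]
    simp [← Nat.cast_smul_eq_nsmul ℝ]
  have hc1 : ∑ i ∈ A, ∑ j ∈ N \ A, R (swap i j) g = - ((N \ A).card : ℝ) • g := by
    rw [Finset.sum_comm, Finset.sum_congr rfl hcross]
    simp [← Nat.cast_smul_eq_nsmul ℝ]
  rw [DD_apply, hs]
  simp only [hs, Finset.sum_add_distrib]
  rw [hAA, hc1, hc2, DD_apply]
  module

/-- One step of the row-peeling recursion. -/
lemma peel {N : Finset (Fin d)} (hN : N.Nonempty) {L : ℕ} {f : H} (hf : f ≠ 0) {c : ℝ}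
    (hL : ∀ A ⊆ N, A.card = L + 1 → eA R A f = 0) (hc : DD R N f = c • f) :
    ∃ A ⊆ N, 1 ≤ A.card ∧ A.card ≤ L ∧ ∃ g : H, g ≠ 0 ∧
      (∀ B ⊆ N \ A, B.card = A.card + 1 → eA R B g = 0) ∧
      DD R (N \ A) g = (c - (A.card : ℝ) ^ 2 + 2 * (N \ A).card) • g := by
  obtain ⟨i0, hi0⟩ := hN
  let F := N.powerset.filter fun A => eA R A f ≠ 0
  have hi0F : {i0} ∈ F := by
    simp only [F, Finset.mem_filter, Finset.mem_powerset, Finset.singleton_subset_iff]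
    exact ⟨hi0, by rw [eA_singleton]; exact hf⟩
  obtain ⟨A, hAF, hmax⟩ := Finset.exists_max_image F Finset.card ⟨_, hi0F⟩
  have hAN : A ⊆ N := Finset.mem_powerset.1 (Finset.mem_filter.1 hAF).1
  have hAne : eA R A f ≠ 0 := (Finset.mem_filter.1 hAF).2
  have hbig : ∀ B ⊆ N, A.card < B.card → eA R B f = 0 := by
    intro B hB hlt
    by_contra hne
    have := hmax B (Finset.mem_filter.2 ⟨Finset.mem_powerset.2 hB, hne⟩)
    omega
  refine ⟨A, hAN, by simpa using hmax _ hi0F, ?_, eA R A f, hAne, ?_, ?_⟩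
  · by_contra hlt
    obtain ⟨A0, hA0, hcard⟩ := Finset.exists_subset_card_eq (s := A) (n := L + 1) (by omega)
    exact hAne (eA_mono R hA0 f (hL A0 (hA0.trans hAN) hcard))
  · intro B hB hcard
    rw [eA_comm R (Finset.disjoint_of_subset_left hB Finset.sdiff_disjoint),
      hbig B (hB.trans Finset.sdiff_subset) (by omega), map_zero]
  · have h1 := DD_split R hAN f (fun j hj => hbig _
      (Finset.insert_subset (Finset.mem_sdiff.1 hj).1 hAN)
      (by rw [Finset.card_insert_of_notMem (Finset.mem_sdiff.1 hj).2]; omega))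
    rw [DD_eA R hAN, hc, map_smul] at h1
    rw [← sub_eq_iff_eq_add'] at h1
    rw [← h1]
    module

lemma eig_le (n : ℕ) : ∀ (N : Finset (Fin d)), N.card = n → ∀ (L : ℕ) (f : H) (c : ℝ), f ≠ 0 →
    (∀ A ⊆ N, A.card = L + 1 → eA R A f = 0) → DD R N f = c • f → c ≤ n * L := by
  induction n using Nat.strong_induction_on with
  | _ n ih =>
    intro N hN L f c hf hL hc
    rcases N.eq_empty_or_nonempty with rfl | hne
    · simp only [DD_apply, Finset.sum_empty] at hc
      rcases smul_eq_zero.1 hc.symm with hc | hc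
      · subst hN; simp [hc]
      · exact absurd hc hf
    · obtain ⟨A, hAN, h1, h2, g, hg, hB, hD⟩ := peel R hne hf hL hc
      have hcard : (N \ A).card + A.card = n := by
        rw [Finset.card_sdiff_add_card_eq_card hAN, hN]
      have := ih (N \ A).card (by omega) _ rfl A.card g _ hg hB hD
      have e1 : ((N \ A).card : ℝ) + A.card = n := by exact_mod_cast hcard
      have e2 : (A.card : ℝ) ≤ L := by exact_mod_cast h2
      have e3 : (0 : ℝ) ≤ n := by positivity
      have e4 : (0 : ℝ) ≤ (N \ A).card := by positivity
      have e5 : (n : ℝ) * A.card ≤ n * L := by gcongr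
      rw [← e1] at e5 ⊢
      nlinarith

variable {R}

lemma norm_R (hR : ∀ s x y, inner ℝ (R s x) y = inner ℝ x (R s⁻¹ y)) (s : Perm (Fin d)) (x : H) :
    ‖R s x‖ = ‖x‖ := by
  have : ‖R s x‖ ^ 2 = ‖x‖ ^ 2 := by
    rw [← real_inner_self_eq_norm_sq, ← real_inner_self_eq_norm_sq, hR, ← Module.End.mul_apply,
      ← map_mul]
    simp
  exact (pow_left_inj₀ (norm_nonneg _) (norm_nonneg _) two_ne_zero).1 this

lemma eig_le_sq (hR : ∀ s x y, inner ℝ (R s x) y = inner ℝ x (R s⁻¹ y))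
    {N : Finset (Fin d)} {f : H} (hf : f ≠ 0) {c : ℝ} (hc : DD R N f = c • f) :
    c ≤ (N.card : ℝ) ^ 2 := by
  have h1 : ‖DD R N f‖ ≤ (N.card : ℝ) ^ 2 * ‖f‖ := by
    rw [DD_apply]
    calc _ ≤ ∑ i ∈ N, ∑ j ∈ N, ‖R (swap i j) f‖ :=
          (norm_sum_le _ _).trans (Finset.sum_le_sum fun i _ => norm_sum_le _ _)
      _ = _ := by simp [norm_R hR]; ring
  rw [hc, norm_smul] at h1
  have := le_of_mul_le_mul_right h1 (norm_pos_iff.2 hf)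
  exact (le_abs_self c).trans this

lemma eig_le_univ (hR : ∀ s x y, inner ℝ (R s x) y = inner ℝ x (R s⁻¹ y))
    {k L : ℕ} (hk : k + L = d) (hkd : 4 * k ≤ d) (hL0 : 1 ≤ L) {f : H} (hf : f ≠ 0) {c : ℝ}
    (hL : ∀ A : Finset (Fin d), A.card = L + 1 → eA R A f = 0)
    (hc : DD R Finset.univ f = c • f) :
    c ≤ (d : ℝ) ^ 2 - 3 / 2 * k * (d - 1) := by
  have hne : (Finset.univ : Finset (Fin d)).Nonempty := by
    rw [← Finset.card_pos]; simp; omega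
  obtain ⟨A, hAN, h1, h2, g, hg, hB, hD⟩ := peel R hne hf (fun A _ h => hL A h) hc
  have hcard : (Finset.univ \ A).card + A.card = d := by
    rw [Finset.card_sdiff_add_card_eq_card hAN]; simp
  have b1 := eig_le R _ _ rfl A.card g _ hg hB hD
  have b2 := eig_le_sq hR hg hD
  generalize (Finset.univ \ A).card = p at *
  generalize A.card = m at *
  have e1 : (p : ℝ) + m = d := by exact_mod_cast hcard
  have e2 : (m : ℝ) ≤ L := by exact_mod_cast h2
  have e3 : (k : ℝ) + L = d := by exact_mod_cast hk
  have e4 : (4 : ℝ) * k ≤ d := by exact_mod_cast hkd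
  have e5 : (0 : ℝ) ≤ k := by positivity
  have e6 : (1 : ℝ) ≤ m := by exact_mod_cast h1
  have e7 : (k : ℝ) ≤ p := by linarith
  have hm : (m : ℝ) = d - p := by linarith
  have e8 : (1 : ℝ) ≤ d := by linarith
  rw [hm] at b1 b2
  by_cases hp1 : (4 : ℝ) * p ≤ d
  · have : (k : ℝ) * (d - 1) ≤ p * (d - 1) := by gcongr
    nlinarith
  · have hk3 : (k : ℝ) * (d - 1) ≤ d / 4 * (d - 1) := by gcongr; linarith
    by_cases hp2 : (2 : ℝ) * p ≤ d
    · nlinarith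
    · nlinarith


/-- Vectors killed by all symmetrizers on `n` letters. -/
def KK (R : Perm (Fin d) →* (H →ₗ[ℝ] H)) (n : ℕ) : Submodule ℝ H where
  carrier := {f | ∀ A : Finset (Fin d), A.card = n → eA R A f = 0}
  add_mem' := by
    intro a b ha hb A hA
    rw [map_add, ha A hA, hb A hA, add_zero]
  zero_mem' := by intro A _; simp
  smul_mem' := by
    intro c x hx A hA
    rw [map_smul, hx A hA, smul_zero]

lemma mem_KK {n : ℕ} {f : H} :
    f ∈ KK R n ↔ ∀ A : Finset (Fin d), A.card = n → eA R A f = 0 := Iff.rfl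

lemma KK_le (n : ℕ) : KK R n ≤ KK R (n + 1) := by
  intro f hf A hA
  obtain ⟨B, hB, hc⟩ := Finset.exists_subset_card_eq (s := A) (n := n) (by omega)
  exact eA_mono R hB f (hf B hc)

lemma KK_one (hd : 0 < d) : KK R 1 = ⊥ := by
  rw [eq_bot_iff]
  intro f hf
  have := hf {⟨0, hd⟩} (by simp)
  rw [eA_singleton] at this
  simpa using this

lemma eA_map (A : Finset (Fin d)) (t : Perm (Fin d)) (f : H) :
    eA R (A.map t.toEmbedding) (R t f) = R t (eA R A f) := by
  simp only [eA_apply, map_sum]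
  refine Finset.sum_bij' (fun s _ => t⁻¹ * s * t) (fun s _ => t * s * t⁻¹) ?_ ?_ ?_ ?_ ?_
  · intro s hs
    rw [mem_symF] at *
    intro i hi
    have : t i ∉ A.map t.toEmbedding := by simpa using hi
    simp [Perm.mul_apply, hs _ this]
  · intro s hs
    rw [mem_symF] at *
    intro i hi
    have : t⁻¹ i ∉ A := by
      intro h
      apply hi
      rw [Finset.mem_map]
      exact ⟨_, h, by simp⟩
    rw [Perm.mul_apply, Perm.mul_apply, hs _ this]
    simp
  · intro s _; group
  · intro s _; group
  · intro s _
    rw [← Module.End.mul_apply, ← map_mul, ← Module.End.mul_apply, ← map_mul]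
    congr 2
    group

lemma R_mem_KK {n : ℕ} {f : H} (hf : f ∈ KK R n) (t : Perm (Fin d)) : R t f ∈ KK R n := by
  intro A hA
  have h := eA_map (R := R) (A.map (t⁻¹).toEmbedding) t f
  rw [hf _ (by simpa using hA), map_zero, Finset.map_map] at h
  convert h
  ext x
  simp

lemma R_mem_KK_orth (hR : ∀ s x y, inner ℝ (R s x) y = inner ℝ x (R s⁻¹ y))
    {n : ℕ} {f : H} (hf : f ∈ (KK R n)ᗮ) (t : Perm (Fin d)) : R t f ∈ (KK R n)ᗮ := by
  rw [Submodule.mem_orthogonal'] at *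
  intro u hu
  rw [hR]
  exact hf _ (R_mem_KK hu _)

lemma DD_symm (hR : ∀ s x y, inner ℝ (R s x) y = inner ℝ x (R s⁻¹ y)) (N : Finset (Fin d)) :
    (DD R N).IsSymmetric := by
  intro x y
  simp only [DD_apply, sum_inner, inner_sum, hR, swap_inv]

lemma DD_mem_KK {n : ℕ} {f : H} (hf : f ∈ KK R n) (N : Finset (Fin d)) :
    DD R N f ∈ KK R n := by
  rw [DD_apply]
  exact Submodule.sum_mem _ fun i _ => Submodule.sum_mem _ fun j _ => R_mem_KK hf _

lemma quad_le [FiniteDimensional ℝ H] {S : H →ₗ[ℝ] H} (hS : S.IsSymmetric) (K : Submodule ℝ H)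
    (hK : ∀ x ∈ K, S x ∈ K) (β : ℝ) (hβ : ∀ f ∈ K, f ≠ 0 → ∀ c : ℝ, S f = c • f → c ≤ β)
    {x : H} (hx : x ∈ K) : inner ℝ (S x) x ≤ β * ‖x‖ ^ 2 := by
  have hT := hS.restrict_invariant hK
  let b := hT.eigenvectorBasis (n := Module.finrank ℝ K) rfl
  have hev : ∀ i, hT.eigenvalues rfl i ≤ β := by
    intro i
    have h1 := hT.apply_eigenvectorBasis (n := Module.finrank ℝ K) rfl i
    refine hβ (b i : H) (b i).2 ?_ _ ?_
    · intro h0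
      have h2 : b i = 0 := Subtype.ext h0
      have h3 := b.orthonormal.1 i
      rw [h2] at h3
      simp at h3
    · exact congrArg Subtype.val h1
  let v : K := ⟨x, hx⟩
  have e1 : inner ℝ (S x) x = inner ℝ (S.restrict hK v) v := rfl
  have e2 : ‖x‖ ^ 2 = inner ℝ v v := (real_inner_self_eq_norm_sq x).symm
  rw [e1, e2, ← b.repr.inner_map_map, ← b.repr.inner_map_map, PiLp.inner_apply, PiLp.inner_apply,
    Finset.mul_sum]
  refine Finset.sum_le_sum fun i _ => ?_
  have h4 : b.repr (S.restrict hK v) i = hT.eigenvalues rfl i * b.repr v i :=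
    hT.eigenvectorBasis_apply_self_apply rfl v i
  rw [h4]
  simp only [RCLike.inner_apply, conj_trivial]
  nlinarith [hev i, mul_self_nonneg (b.repr v i)]

end abstractRep

section swaps

lemma sum_swaps {d : ℕ} (F : Perm (Fin d) → ℝ) :
    ∑ i, ∑ j, F (swap i j) = d * F 1 + 2 * ∑ τ : {τ : Perm (Fin d) // τ.IsSwap}, F τ := by
  have h1 : ∑ i : Fin d, ∑ j, F (swap i j)
      = ∑ i : Fin d, F 1 + ∑ p : Fin d × Fin d with p.1 ≠ p.2, F (swap p.1 p.2) := by
    rw [← Fintype.sum_prod_type' (f := fun i j => F (swap i j)),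
      ← Finset.sum_filter_add_sum_filter_not Finset.univ (fun p : Fin d × Fin d => p.1 = p.2)]
    congr 1
    refine Finset.sum_bij' (fun p _ => p.1) (fun i _ => (i, i)) ?_ ?_ ?_ ?_ ?_ <;> simp
    intro a
    rfl
  have h2 : ∑ p : Fin d × Fin d with p.1 ≠ p.2, F (swap p.1 p.2)
      = ∑ τ ∈ Finset.univ.filter (fun τ : Perm (Fin d) => τ.IsSwap), 2 * F τ := by
    rw [← Finset.sum_fiberwise_of_maps_to (g := fun p : Fin d × Fin d => swap p.1 p.2)
      (t := Finset.univ.filter (fun τ : Perm (Fin d) => τ.IsSwap))]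
    · refine Finset.sum_congr rfl fun τ hτ => ?_
      have hτ' : τ.IsSwap := by simpa using hτ
      rw [Finset.sum_congr rfl (g := fun _ => F τ) (by
        intro p hp; rw [(Finset.mem_filter.1 hp).2]), Finset.sum_const]
      have : (Finset.univ.filter (fun p : Fin d × Fin d => p.1 ≠ p.2) |>.filter
          fun p => swap p.1 p.2 = τ).card = 2 := by
        rw [← Perm.card_support_eq_two.2 hτ']
        refine Finset.card_bij' (fun p _ => p.1) (fun i _ => (i, τ i)) ?_ ?_ ?_ ?_
        · intro p hp
          simp only [Finset.mem_filter, Finset.mem_univ, true_and] at hp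
          rw [Perm.mem_support, ← hp.2, swap_apply_left]
          exact fun h => hp.1 h.symm
        · intro i hi
          rw [Perm.mem_support] at hi
          simp only [Finset.mem_filter, Finset.mem_univ, true_and]
          refine ⟨fun h => hi h.symm, ?_⟩
          obtain ⟨x, y, hxy, rfl⟩ := hτ'
          by_cases hix : i = x
          · subst hix; simp
          · by_cases hiy : i = y
            · subst hiy; simp [swap_comm]
            · exact absurd (swap_apply_of_ne_of_ne hix hiy) hi
        · intro p hp
          simp only [Finset.mem_filter, Finset.mem_univ, true_and] at hp
          rw [← hp.2]
          simp
        · intro i hi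
          rfl
      rw [this]
      simp
    · intro p hp
      simp only [Finset.mem_filter, Finset.mem_univ, true_and] at *
      exact ⟨p.1, p.2, hp, rfl⟩
  rw [h1, h2, ← Finset.mul_sum]
  congr 1
  · simp
  · congr 1
    exact (Finset.sum_subtype _ (by simp) _)

lemma card_swaps (d : ℕ) :
    (d : ℝ) * d = d + 2 * (Fintype.card {τ : Perm (Fin d) // τ.IsSwap} : ℝ) := by
  have := sum_swaps (d := d) (fun _ => 1)
  simpa using this

end swaps

section walkSection

variable {d : ℕ} {H : Type*} [NormedAddCommGroup H] [InnerProductSpace ℝ H]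
  {R : Perm (Fin d) →* (H →ₗ[ℝ] H)}

/-- The lazy half-step. -/
def QQ (R : Perm (Fin d) →* (H →ₗ[ℝ] H)) (s : Perm (Fin d)) : H →ₗ[ℝ] H :=
  (1 / 2 : ℝ) • (LinearMap.id + R s)

lemma QQ_apply (s : Perm (Fin d)) (x : H) : QQ R s x = (1 / 2 : ℝ) • (x + R s x) := rfl

/-- The quenched product of half-steps. -/
def walk (R : Perm (Fin d) →* (H →ₗ[ℝ] H)) : {T : ℕ} → (Fin T → Perm (Fin d)) → (H →ₗ[ℝ] H)
  | 0, _ => LinearMap.id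
  | _ + 1, σ => QQ R (σ 0) ∘ₗ walk R (Fin.tail σ)

lemma norm_QQ (hR : ∀ s x y, inner ℝ (R s x) y = inner ℝ x (R s⁻¹ y)) (s : Perm (Fin d)) (x : H) :
    ‖QQ R s x‖ ^ 2 = 1 / 2 * (‖x‖ ^ 2 + inner ℝ (R s x) x) := by
  rw [QQ_apply, norm_smul, mul_pow, norm_add_sq_real, norm_R hR, real_inner_comm]
  norm_num
  ring

lemma walk_mem (K : Submodule ℝ H) (hK : ∀ s, ∀ x ∈ K, R s x ∈ K) {T : ℕ}
    (σ : Fin T → Perm (Fin d)) {x : H} (hx : x ∈ K) : walk R σ x ∈ K := by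
  induction T with
  | zero => exact hx
  | succ T ih =>
    have := ih (Fin.tail σ)
    exact K.smul_mem _ (K.add_mem this (hK _ _ this))

lemma walk_cons {T : ℕ} (τ : {τ : Perm (Fin d) // τ.IsSwap})
    (σ : Fin T → {τ : Perm (Fin d) // τ.IsSwap}) (x : H) :
    walk R (fun t => ((Fin.cons (α := fun _ => {τ : Perm (Fin d) // τ.IsSwap}) τ σ :
      Fin (T + 1) → {τ : Perm (Fin d) // τ.IsSwap}) t : Perm (Fin d))) x
      = QQ R τ (walk R (fun t => (σ t : Perm (Fin d))) x) := by
  have h : Fin.tail (fun t => ((Fin.cons (α := fun _ => {τ : Perm (Fin d) // τ.IsSwap}) τ σ :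
      Fin (T + 1) → {τ : Perm (Fin d) // τ.IsSwap}) t : Perm (Fin d)))
      = fun t => (σ t : Perm (Fin d)) := by
    funext t
    simp [Fin.tail]
  rw [walk, h, LinearMap.comp_apply, Fin.cons_zero]

/-- exponential rate -/
def rate (d k : ℕ) : ℝ := if 4 * k ≤ d then 3 / 4 * k else 1 / 2 * k

lemma one_step [FiniteDimensional ℝ H]
    (hR : ∀ s x y, inner ℝ (R s x) y = inner ℝ x (R s⁻¹ y)) {k L : ℕ} (hk : k + L = d)
    (hL : 1 ≤ L) {x : H} (hx : x ∈ KK R (L + 1)) :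
    ∑ τ : {τ : Perm (Fin d) // τ.IsSwap}, ‖QQ R τ x‖ ^ 2 ≤
      Fintype.card {τ : Perm (Fin d) // τ.IsSwap} * Real.exp (- (rate d k) / d) * ‖x‖ ^ 2 := by
  have hd : (1 : ℝ) ≤ d := by exact_mod_cast (by omega : 1 ≤ d)
  have hkL : (k : ℝ) + L = d := by exact_mod_cast hk
  have hk0 : (0 : ℝ) ≤ k := by positivity
  have hquad : inner ℝ (DD R Finset.univ x) x ≤ ((d : ℝ) ^ 2 - 2 * rate d k * (d - 1)) * ‖x‖ ^ 2 := by
    refine quad_le (DD_symm hR _) (KK R (L + 1)) (fun y hy => DD_mem_KK hy _) _ ?_ hx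
    intro f hf hf0 c hc
    unfold rate
    split_ifs with h
    · have := eig_le_univ hR hk h hL hf0 hf hc
      linarith
    · have := eig_le R d Finset.univ (by simp) L f c hf0 (fun A _ h => hf A h) hc
      have h2 : (L : ℝ) = d - k := by linarith
      rw [h2] at this
      nlinarith
  have hsum := sum_swaps (fun s => inner ℝ (R s x) x)
  have hcard := card_swaps d
  have hDD : inner ℝ (DD R Finset.univ x) x = ∑ i, ∑ j, inner ℝ (R (swap i j) x) x := by
    simp only [DD_apply, sum_inner]
  rw [← hDD] at hsum
  have h1 : inner ℝ (R 1 x) x = ‖x‖ ^ 2 := by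
    rw [map_one]; exact real_inner_self_eq_norm_sq x
  rw [h1] at hsum
  simp only [norm_QQ hR]
  rw [← Finset.mul_sum, Finset.sum_add_distrib]
  simp only [Finset.sum_const, Finset.card_univ, nsmul_eq_mul]
  have hexp := Real.add_one_le_exp (- (rate d k) / d)
  have h3 : (Fintype.card {τ : Perm (Fin d) // τ.IsSwap} : ℝ) * (- (rate d k) / d + 1) * ‖x‖ ^ 2 ≤
      Fintype.card {τ : Perm (Fin d) // τ.IsSwap} * Real.exp (- (rate d k) / d) * ‖x‖ ^ 2 := by
    gcongr
  refine le_trans ?_ h3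
  have hX : (Fintype.card {τ : Perm (Fin d) // τ.IsSwap} : ℝ) = d * (d - 1) / 2 := by linarith
  rw [hX]
  have h4 : (d : ℝ) * (d - 1) / 2 * (- (rate d k) / d + 1) * ‖x‖ ^ 2
      = (d - 1) / 2 * (d - rate d k) * ‖x‖ ^ 2 := by
    field_simp
    ring
  rw [h4]
  nlinarith

lemma decay [FiniteDimensional ℝ H]
    (hR : ∀ s x y, inner ℝ (R s x) y = inner ℝ x (R s⁻¹ y)) {k L : ℕ} (hk : k + L = d)
    (hL : 1 ≤ L) {x : H} (hx : x ∈ KK R (L + 1)) (T : ℕ) :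
    ∑ σ : Fin T → {τ : Perm (Fin d) // τ.IsSwap}, ‖walk R (fun t => (σ t : Perm (Fin d))) x‖ ^ 2 ≤
      (Fintype.card {τ : Perm (Fin d) // τ.IsSwap} : ℝ) ^ T *
        Real.exp (- (rate d k) / d) ^ T * ‖x‖ ^ 2 := by
  induction T with
  | zero => simp [walk]
  | succ T ih =>
    rw [← (Fin.consEquiv fun _ : Fin (T + 1) => {τ : Perm (Fin d) // τ.IsSwap}).sum_comp,
      Fintype.sum_prod_type, Finset.sum_comm]
    calc _ ≤ ∑ σ : Fin T → {τ : Perm (Fin d) // τ.IsSwap},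
          (Fintype.card {τ : Perm (Fin d) // τ.IsSwap} : ℝ) * Real.exp (- (rate d k) / d) *
            ‖walk R (fun t => (σ t : Perm (Fin d))) x‖ ^ 2 := by
          refine Finset.sum_le_sum fun σ _ => ?_
          have hm := walk_mem (KK R (L + 1)) (fun s y hy => R_mem_KK hy s)
            (fun t => (σ t : Perm (Fin d))) hx
          simp only [Fin.consEquiv_apply, walk_cons]
          exact one_step hR hk hL hm
      _ ≤ _ := by
          rw [← Finset.mul_sum, pow_succ, pow_succ]
          calc _ ≤ (Fintype.card {τ : Perm (Fin d) // τ.IsSwap} : ℝ) * Real.exp (- (rate d k) / d) *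
            ((Fintype.card {τ : Perm (Fin d) // τ.IsSwap} : ℝ) ^ T *
              Real.exp (- (rate d k) / d) ^ T * ‖x‖ ^ 2) :=
                mul_le_mul_of_nonneg_left ih (by positivity)
            _ = _ := by ring

end walkSection


section regular

variable {d : ℕ}

/-- The space of functions on the symmetric group. -/
abbrev HH (d : ℕ) := EuclideanSpace ℝ (Perm (Fin d))

/-- The left regular representation. -/
def reg (d : ℕ) : Perm (Fin d) →* (HH d →ₗ[ℝ] HH d) where
  toFun s :=
    { toFun := fun f => WithLp.toLp 2 (fun π => f (s⁻¹ * π))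
      map_add' := by intro f g; ext π; simp
      map_smul' := by intro c f; ext π; simp }
  map_one' := by ext f π; simp
  map_mul' := by
    intro s t
    ext f π
    simp [mul_assoc]

lemma reg_apply (s : Perm (Fin d)) (f : HH d) (π : Perm (Fin d)) :
    reg d s f π = f (s⁻¹ * π) := rfl

lemma reg_inner (s : Perm (Fin d)) (x y : HH d) :
    inner ℝ (reg d s x) y = inner ℝ x (reg d s⁻¹ y) := by
  rw [PiLp.inner_apply, PiLp.inner_apply, ← Equiv.sum_comp (Equiv.mulLeft s)]
  refine Finset.sum_congr rfl fun π _ => ?_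
  simp [reg_apply]

/-- Right translation. -/
def rr (g : Perm (Fin d)) : HH d ≃ₗᵢ[ℝ] HH d :=
  LinearIsometryEquiv.piLpCongrLeft 2 ℝ ℝ (Equiv.mulRight g)

lemma rr_apply (g : Perm (Fin d)) (f : HH d) (π : Perm (Fin d)) : rr g f π = f (π * g⁻¹) := by
  simp [rr, LinearIsometryEquiv.piLpCongrLeft_apply, Equiv.piCongrLeft']

lemma eA_rr (A : Finset (Fin d)) (g : Perm (Fin d)) (f : HH d) :
    eA (reg d) A (rr g f) = rr g (eA (reg d) A f) := by
  simp only [eA_apply, map_sum]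
  refine Finset.sum_congr rfl fun s _ => ?_
  ext π
  simp [reg_apply, rr_apply, mul_assoc]

lemma rr_mem_KK {n : ℕ} (g : Perm (Fin d)) (f : HH d) :
    rr g f ∈ KK (reg d) n ↔ f ∈ KK (reg d) n := by
  simp only [mem_KK, eA_rr]
  simp

lemma proj_rr (n : ℕ) (g : Perm (Fin d)) (f : HH d) :
    (KK (reg d) n).starProjection (rr g f) = rr g ((KK (reg d) n).starProjection f) := by
  apply Submodule.eq_starProjection_of_mem_of_inner_eq_zero
  · rw [rr_mem_KK]; exact Submodule.starProjection_apply_mem _ _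
  · intro w hw
    rw [← map_sub, LinearIsometryEquiv.inner_map_eq_flip]
    apply Submodule.starProjection_inner_eq_zero
    rw [← rr_mem_KK g]
    simpa using hw

/-- delta mass -/
def dl (g : Perm (Fin d)) : HH d := EuclideanSpace.single g 1

lemma rr_dl (g : Perm (Fin d)) : rr g (dl 1) = dl g := by
  ext π
  rw [rr_apply]
  simp [dl, mul_inv_eq_one]

lemma finrank_KK (n : ℕ) : (Module.finrank ℝ (KK (reg d) n) : ℝ) =
    d.factorial * ‖(KK (reg d) n).starProjection (dl 1)‖ ^ 2 := by
  have hproj : LinearMap.IsProj (KK (reg d) n)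
      ((KK (reg d) n).starProjection : HH d →ₗ[ℝ] HH d) := by
    constructor
    · intro x; exact Submodule.starProjection_apply_mem _ _
    · intro x hx; exact Submodule.starProjection_eq_self_iff.2 hx
  rw [← hproj.trace, LinearMap.trace_eq_sum_inner _ (EuclideanSpace.basisFun (Perm (Fin d)) ℝ)]
  have : ∀ g : Perm (Fin d), inner ℝ (EuclideanSpace.basisFun (Perm (Fin d)) ℝ g)
      (((KK (reg d) n).starProjection : HH d →ₗ[ℝ] HH d)
        (EuclideanSpace.basisFun (Perm (Fin d)) ℝ g))
      = ‖(KK (reg d) n).starProjection (dl 1)‖ ^ 2 := by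
    intro g
    rw [EuclideanSpace.basisFun_apply]
    change inner ℝ (dl g) ((KK (reg d) n).starProjection (dl g)) = _
    rw [real_inner_comm]
    have h := Submodule.re_inner_starProjection_eq_normSq (KK (reg d) n) (dl g)
    rw [← rr_dl, proj_rr, LinearIsometryEquiv.inner_map_map]
    have h := Submodule.re_inner_starProjection_eq_normSq (KK (reg d) n) (dl (1 : Perm (Fin d)))
    simpa using h
  rw [Finset.sum_congr rfl fun g _ => this g]
  simp [Fintype.card_perm]

lemma card_symF (A : Finset (Fin d)) : (symF A).card = A.card.factorial := by
  induction A using Finset.induction_on with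
  | empty => simp [symF_empty]
  | insert j A hj ih =>
    have h := eA_insert (1 : Perm (Fin d) →* (ℝ →ₗ[ℝ] ℝ)) hj 1
    simp [eA_apply] at h
    rw [Finset.card_insert_of_notMem hj, Nat.factorial_succ, ← ih]
    have h2 : ((symF (insert j A)).card : ℝ) = ((A.card + 1) * (symF A).card : ℕ) := by
      rw [h]; push_cast; ring
    exact_mod_cast h2

lemma rank_eA (A : Finset (Fin d)) :
    (A.card.factorial : ℝ) * Module.finrank ℝ (LinearMap.range (eA (reg d) A)) = d.factorial := by
  have hpos : (A.card.factorial : ℝ) ≠ 0 := by positivity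
  have hproj : LinearMap.IsProj (LinearMap.range (eA (reg d) A))
      ((A.card.factorial : ℝ)⁻¹ • eA (reg d) A) := by
    constructor
    · intro x; exact Submodule.smul_mem _ _ ⟨x, rfl⟩
    · rintro _ ⟨x, rfl⟩
      rw [LinearMap.smul_apply, eA_apply (reg d) A (eA (reg d) A x),
        Finset.sum_congr rfl fun s hs => R_eA (reg d) hs x, Finset.sum_const, card_symF,
        ← Nat.cast_smul_eq_nsmul ℝ, smul_smul, inv_mul_cancel₀ hpos, one_smul]
  rw [← hproj.trace, map_smul, smul_eq_mul, mul_inv_cancel_left₀ hpos,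
    LinearMap.trace_eq_sum_inner _ (EuclideanSpace.basisFun (Perm (Fin d)) ℝ)]
  have : ∀ g : Perm (Fin d), inner ℝ (EuclideanSpace.basisFun (Perm (Fin d)) ℝ g)
      (eA (reg d) A (EuclideanSpace.basisFun (Perm (Fin d)) ℝ g)) = 1 := by
    intro g
    rw [EuclideanSpace.basisFun_apply, eA_apply, inner_sum, Finset.sum_eq_single 1]
    · simp
    · intro s _ hs
      rw [EuclideanSpace.inner_single_left, reg_apply]
      simp [hs]
    · intro h
      exact absurd (mem_symF.2 fun i _ => rfl) h
  rw [Finset.sum_congr rfl fun g _ => this g]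
  simp [Fintype.card_perm]

lemma codim_KK (n : ℕ) : (d.factorial : ℝ) ≤ Module.finrank ℝ (KK (reg d) n) +
    d.choose n * (d.factorial / n.factorial : ℝ) := by
  let E : HH d →ₗ[ℝ] ((A : {A : Finset (Fin d) // A.card = n}) →
      LinearMap.range (eA (reg d) A.1)) :=
    LinearMap.pi fun A => (eA (reg d) A.1).rangeRestrict
  have hker : LinearMap.ker E = KK (reg d) n := by
    ext f
    rw [LinearMap.mem_ker, mem_KK, funext_iff]
    constructor
    · intro h A hA
      exact congrArg Subtype.val (h ⟨A, hA⟩)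
    · intro h A
      exact Subtype.ext (h A.1 A.2)
  have h1 := E.finrank_range_add_finrank_ker
  rw [hker, finrank_euclideanSpace, Fintype.card_perm, Fintype.card_fin] at h1
  have h2 := Submodule.finrank_le (LinearMap.range E)
  rw [Module.finrank_pi_fintype] at h2
  have h3 : ∀ A : {A : Finset (Fin d) // A.card = n},
      (Module.finrank ℝ (LinearMap.range (eA (reg d) A.1)) : ℝ) = d.factorial / n.factorial := by
    intro A
    have := rank_eA A.1
    rw [A.2] at this
    rw [eq_div_iff (by positivity), mul_comm]; exact this
  have h4 : ((∑ A : {A : Finset (Fin d) // A.card = n},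
      Module.finrank ℝ (LinearMap.range (eA (reg d) A.1)) : ℕ) : ℝ)
      = d.choose n * (d.factorial / n.factorial : ℝ) := by
    push_cast
    rw [Finset.sum_congr rfl fun A _ => h3 A, Finset.sum_const, Finset.card_univ,
      Fintype.card_finset_len, Fintype.card_fin, nsmul_eq_mul]
  rw [← h4]
  have h5 : d.factorial ≤ Module.finrank ℝ (KK (reg d) n) +
    (∑ A : {A : Finset (Fin d) // A.card = n},
      Module.finrank ℝ (LinearMap.range (eA (reg d) A.1))) := by omega
  exact_mod_cast h5

/-- The projections of the delta mass. -/
def yy (d n : ℕ) : HH d := (KK (reg d) n).starProjection (dl 1)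

lemma norm_yy_diff (n : ℕ) :
    ‖yy d (n + 1) - yy d n‖ ^ 2 ≤ d.choose n / n.factorial := by
  have h1 : inner ℝ (yy d (n + 1) - yy d n) (yy d n) = 0 := by
    have a := Submodule.starProjection_inner_eq_zero (K := KK (reg d) n) (dl 1) (yy d n)
      (Submodule.starProjection_apply_mem _ _)
    have b := Submodule.starProjection_inner_eq_zero (K := KK (reg d) (n + 1)) (dl 1) (yy d n)
      (KK_le n (Submodule.starProjection_apply_mem _ _))
    rw [inner_sub_left] at *
    change _ - inner ℝ (yy d n) _ = 0 at a
    change _ - inner ℝ (yy d (n + 1)) _ = 0 at b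
    linarith
  have h2 : ‖yy d (n + 1)‖ ^ 2 = ‖yy d (n + 1) - yy d n‖ ^ 2 + ‖yy d n‖ ^ 2 := by
    have := norm_add_sq_real (yy d (n + 1) - yy d n) (yy d n)
    rw [h1] at this
    simpa using this
  have h3 : ‖yy d (n + 1)‖ ^ 2 ≤ 1 := by
    have : ‖yy d (n + 1)‖ ≤ ‖(dl 1 : HH d)‖ := Submodule.norm_starProjection_apply_le _ _
    have h : ‖(dl 1 : HH d)‖ = 1 := by simp [dl]
    rw [h] at this
    exact pow_le_one₀ (norm_nonneg _) this
  have h4 := codim_KK (d := d) n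
  rw [finrank_KK] at h4
  change _ ≤ (d.factorial : ℝ) * ‖yy d n‖ ^ 2 + _ at h4
  have hpos : (0 : ℝ) < d.factorial := by positivity
  have h5 : (1 : ℝ) ≤ ‖yy d n‖ ^ 2 + d.choose n / n.factorial := by
    refine le_of_mul_le_mul_left ?_ hpos
    calc _ ≤ _ := (mul_one _).le
      _ ≤ _ := h4
      _ = _ := by ring
  linarith

lemma yy_mem (n : ℕ) : yy d n ∈ KK (reg d) n := Submodule.starProjection_apply_mem _ _

lemma yy_diff_orth (n : ℕ) : yy d (n + 1) - yy d n ∈ (KK (reg d) n)ᗮ := by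
  rw [Submodule.mem_orthogonal']
  intro w hw
  have a := Submodule.starProjection_inner_eq_zero (K := KK (reg d) n) (dl 1) w hw
  have b := Submodule.starProjection_inner_eq_zero (K := KK (reg d) (n + 1)) (dl 1) w
    (KK_le n hw)
  rw [inner_sub_left] at *
  change _ - inner ℝ (yy d n) _ = 0 at a
  change _ - inner ℝ (yy d (n + 1)) _ = 0 at b
  linarith

lemma walk_sum (T : ℕ) (n : ℕ) (hn : n + 1 ≤ d) :
    ∑ σ : Fin T → {τ : Perm (Fin d) // τ.IsSwap},
      ‖walk (reg d) (fun t => (σ t : Perm (Fin d))) (yy d (n + 1))‖ ^ 2 ≤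
    (Fintype.card {τ : Perm (Fin d) // τ.IsSwap} : ℝ) ^ T * ∑ l ∈ Finset.Icc 1 n,
      Real.exp (- (rate d (d - l)) / d) ^ T * (d.choose l / l.factorial) := by
  induction n with
  | zero =>
    have : yy d (0 + 1) = 0 := by
      have := yy_mem (d := d) 1
      rw [KK_one (by omega)] at this
      simpa using this
    simp [this]
  | succ n ih =>
    have ih := ih (by omega)
    rw [Finset.sum_Icc_succ_top (by omega), mul_add]
    have hsplit : ∀ σ : Fin T → {τ : Perm (Fin d) // τ.IsSwap},
      ‖walk (reg d) (fun t => (σ t : Perm (Fin d))) (yy d (n + 1 + 1))‖ ^ 2 =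
      ‖walk (reg d) (fun t => (σ t : Perm (Fin d))) (yy d (n + 1))‖ ^ 2 +
      ‖walk (reg d) (fun t => (σ t : Perm (Fin d))) (yy d (n + 1 + 1) - yy d (n + 1))‖ ^ 2 := by
      intro σ
      have e : yy d (n + 1 + 1) = yy d (n + 1) + (yy d (n + 1 + 1) - yy d (n + 1)) := by abel
      conv_lhs => rw [e, map_add]
      rw [norm_add_sq_real]
      have h0 : inner ℝ (walk (reg d) (fun t => (σ t : Perm (Fin d))) (yy d (n + 1)))
          (walk (reg d) (fun t => (σ t : Perm (Fin d))) (yy d (n + 1 + 1) - yy d (n + 1))) = 0 := by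
        refine Submodule.inner_right_of_mem_orthogonal (K := KK (reg d) (n + 1)) ?_ ?_
        · exact walk_mem _ (fun s x hx => R_mem_KK hx s) _ (yy_mem _)
        · exact walk_mem _ (fun s x hx => R_mem_KK_orth reg_inner hx s) _ (yy_diff_orth _)
      rw [h0]; ring
    rw [Finset.sum_congr rfl fun σ _ => hsplit σ, Finset.sum_add_distrib]
    refine add_le_add ih ?_
    refine (decay (k := d - (n + 1)) (L := n + 1) reg_inner (by omega) (by omega)
      (Submodule.sub_mem _ (yy_mem _) (KK_le _ (yy_mem _))) T).trans ?_
    rw [mul_assoc]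
    gcongr
    exact norm_yy_diff _

end regular


section final

variable {d : ℕ}

lemma permProd_succ {T : ℕ} (σ : Fin (T + 1) → Perm (Fin d)) (b : Bool) (ξ : Fin T → Bool) :
    permProd σ (Fin.cons b ξ) = (if b then σ 0 else 1) * permProd (Fin.tail σ) ξ := by
  simp [permProd, List.ofFn_succ, Fin.tail]

lemma permProdPMF_eq {T : ℕ} (σ : Fin T → Perm (Fin d)) (τ : Perm (Fin d)) :
    permProdPMF σ τ = (∑ ξ : Fin T → Bool, if permProd σ ξ = τ then (1 : ℝ) else 0) / 2 ^ T := by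
  simp [permProdPMF]

lemma permProdPMF_succ {T : ℕ} (σ : Fin (T + 1) → Perm (Fin d)) (τ : Perm (Fin d)) :
    permProdPMF σ τ = 1 / 2 * (permProdPMF (Fin.tail σ) τ +
      permProdPMF (Fin.tail σ) ((σ 0)⁻¹ * τ)) := by
  simp only [permProdPMF_eq]
  rw [← Equiv.sum_comp (Fin.consEquiv fun _ : Fin (T + 1) => Bool), Fintype.sum_prod_type]
  have hc : ∀ (b : Bool) (ξ : Fin T → Bool),
      (Fin.consEquiv fun _ : Fin (T + 1) => Bool) (b, ξ) = Fin.cons b ξ := fun _ _ => rfl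
  simp only [hc, permProd_succ, Fintype.sum_bool, if_true, Bool.false_eq_true,
    if_false, ← eq_inv_mul_iff_mul_eq, inv_one, one_mul]
  rw [pow_succ]
  field_simp
  ring

lemma walk_dl {T : ℕ} (σ : Fin T → Perm (Fin d)) (τ : Perm (Fin d)) :
    walk (reg d) σ (dl 1) τ = permProdPMF σ τ := by
  induction T generalizing τ with
  | zero =>
    by_cases h : τ = 1
    · subst h; simp [walk, dl, permProdPMF_eq, permProd]
    · have h' : ¬ (1 : Perm (Fin d)) = τ := fun e => h e.symm
      simp [walk, dl, permProdPMF_eq, permProd, h, h']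
  | succ T ih =>
    rw [permProdPMF_succ, walk, LinearMap.comp_apply, QQ_apply, ← ih, ← ih]
    rfl

/-- uniform vector -/
def uu (d : ℕ) : HH d := WithLp.toLp 2 (fun _ => ((d.factorial : ℝ))⁻¹)

lemma walk_uu {T : ℕ} (σ : Fin T → Perm (Fin d)) : walk (reg d) σ (uu d) = uu d := by
  induction T with
  | zero => rfl
  | succ T ih =>
    rw [walk, LinearMap.comp_apply, ih, QQ_apply]
    ext π
    simp only [PiLp.smul_apply, PiLp.add_apply, reg_apply, smul_eq_mul, uu]
    ring

lemma eA_univ (f : HH d) (π : Perm (Fin d)) :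
    eA (reg d) Finset.univ f π = ∑ s : Perm (Fin d), f s := by
  have h : symF (Finset.univ : Finset (Fin d)) = Finset.univ := by
    ext s; simp [mem_symF]
  rw [eA_apply, h, WithLp.ofLp_sum, Finset.sum_apply]
  simp only [reg_apply]
  exact Equiv.sum_comp ((Equiv.inv (Perm (Fin d))).trans (Equiv.mulRight π)) (fun s => f s)

lemma yy_top : yy d d = dl 1 - uu d := by
  have hpos : (d.factorial : ℝ) ≠ 0 := by positivity
  unfold yy
  apply Submodule.eq_starProjection_of_mem_of_inner_eq_zero
  · intro A hA
    have : A = Finset.univ := by rw [← Finset.card_eq_iff_eq_univ]; simpa using hA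
    subst this
    ext π
    rw [eA_univ]
    simp [dl, uu, Fintype.card_perm, hpos]
  · intro w hw
    have h := hw Finset.univ (by simp)
    have h1 : ∑ s : Perm (Fin d), w s = 0 := by
      rw [← eA_univ w 1, h]; rfl
    rw [sub_sub_cancel, PiLp.inner_apply]
    simp only [uu, RCLike.inner_apply, conj_trivial]
    rw [← Finset.sum_mul, h1, zero_mul]

lemma tv_sq {T : ℕ} (σ : Fin T → Perm (Fin d)) :
    tvToUniform σ ^ 2 ≤ d.factorial * ‖walk (reg d) σ (yy d d)‖ ^ 2 := by
  rw [yy_top, map_sub, walk_uu, tvToUniform, EuclideanSpace.norm_sq_eq]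
  have h := sq_sum_le_card_mul_sum_sq (s := (Finset.univ : Finset (Perm (Fin d))))
    (f := fun τ => |permProdPMF σ τ - ((d.factorial : ℝ))⁻¹|)
  rw [Finset.card_univ, Fintype.card_perm, Fintype.card_fin] at h
  refine h.trans (le_of_eq ?_)
  congr 1
  refine Finset.sum_congr rfl fun τ _ => ?_
  rw [PiLp.sub_apply, walk_dl, Real.norm_eq_abs]
  rfl

lemma tv_nonneg {T : ℕ} (σ : Fin T → Perm (Fin d)) : 0 ≤ tvToUniform σ :=
  Finset.sum_nonneg fun _ _ => abs_nonneg _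

lemma tv_le_two {T : ℕ} (σ : Fin T → Perm (Fin d)) : tvToUniform σ ≤ 2 := by
  have hpos : (d.factorial : ℝ) ≠ 0 := by positivity
  have h0 : ∀ τ, 0 ≤ permProdPMF σ τ := fun τ => by unfold permProdPMF; positivity
  have h1 : ∑ τ : Perm (Fin d), permProdPMF σ τ = 1 := by
    simp only [permProdPMF_eq]
    rw [← Finset.sum_div, Finset.sum_comm]
    simp
  calc tvToUniform σ ≤ ∑ τ : Perm (Fin d), (permProdPMF σ τ + ((d.factorial : ℝ))⁻¹) := by
        refine Finset.sum_le_sum fun τ _ => ?_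
        have hi : (0 : ℝ) ≤ ((d.factorial : ℝ))⁻¹ := by positivity
        rw [abs_le]
        constructor <;> linarith [h0 τ]
    _ = 2 := by
        rw [Finset.sum_add_distrib, h1]
        simp [Fintype.card_perm, hpos]
        norm_num

lemma card_pos' (hd : 2 ≤ d) : (0 : ℝ) < Fintype.card {τ : Perm (Fin d) // τ.IsSwap} := by
  have h := card_swaps d
  have : (2 : ℝ) ≤ d := by exact_mod_cast hd
  nlinarith

lemma avg_le_two (hd : 2 ≤ d) (T : ℕ) : avgTV d T ≤ 2 := by
  have hp := card_pos' hd
  rw [avgTV, div_le_iff₀ (by positivity)]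
  refine (Finset.sum_le_sum fun σ _ => tv_le_two _).trans (le_of_eq ?_)
  simp
  ring

lemma avg_sq (hd : 2 ≤ d) (T : ℕ) : avgTV d T ^ 2 ≤ ∑ l ∈ Finset.Icc 1 (d - 1),
      d.factorial * (Real.exp (- (rate d (d - l)) / d) ^ T * (d.choose l / l.factorial)) := by
  have hp := card_pos' hd
  have hw := walk_sum (d := d) T (d - 1) (by omega)
  rw [show d - 1 + 1 = d by omega] at hw
  have h := sq_sum_le_card_mul_sum_sq
    (s := (Finset.univ : Finset (Fin T → {τ : Perm (Fin d) // τ.IsSwap})))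
    (f := fun σ => tvToUniform fun t => (σ t : Perm (Fin d)))
  have hc : ((Finset.univ : Finset (Fin T → {τ : Perm (Fin d) // τ.IsSwap})).card : ℝ)
      = (Fintype.card {τ : Perm (Fin d) // τ.IsSwap} : ℝ) ^ T := by
    simp
  rw [hc] at h
  have h2 := Finset.sum_le_sum (s := Finset.univ)
    fun (σ : Fin T → {τ : Perm (Fin d) // τ.IsSwap}) _ => tv_sq fun t => (σ t : Perm (Fin d))
  rw [← Finset.mul_sum] at h2
  rw [avgTV, div_pow, div_le_iff₀ (by positivity), ← Finset.mul_sum]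
  set M := (Fintype.card {τ : Perm (Fin d) // τ.IsSwap} : ℝ) ^ T with hM
  have hM0 : 0 ≤ M := by positivity
  have hf : (0 : ℝ) ≤ d.factorial := by positivity
  refine h.trans ((mul_le_mul_of_nonneg_left (h2.trans (mul_le_mul_of_nonneg_left hw hf)) hM0).trans
    (le_of_eq ?_))
  ring

/-- summable weights -/
def ww (k : ℕ) : ℝ := 1 ^ k / (k.factorial : ℝ) + (1 / 2) ^ k * Real.exp (8 * Real.exp 1)

lemma ww_summable : Summable ww :=
  (Real.summable_pow_div_factorial 1).add (summable_geometric_two.mul_right _)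

lemma ww_nonneg (k : ℕ) : 0 ≤ ww k := by unfold ww; positivity

lemma term_aux {k : ℕ} (hd : 1 ≤ d) :
    (d : ℝ) ^ (2 * k) / k.factorial * Real.exp (- (3 * rate d k * Real.log d)) ≤ ww k := by
  have hdR : (1 : ℝ) ≤ d := by exact_mod_cast hd
  have hd0 : (0 : ℝ) < d := by linarith
  have hlog : 0 ≤ Real.log d := Real.log_nonneg hdR
  have hpow : ∀ j : ℕ, (d : ℝ) ^ j = Real.exp (j * Real.log d) := by
    intro j
    rw [mul_comm, Real.exp_mul, Real.exp_log hd0, Real.rpow_natCast]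
  have hk0 : (0 : ℝ) < k.factorial := by positivity
  unfold rate
  split_ifs with h
  · have : (d : ℝ) ^ (2 * k) / k.factorial * Real.exp (- (3 * (3 / 4 * k) * Real.log d))
        ≤ 1 ^ k / (k.factorial : ℝ) := by
      rw [div_mul_eq_mul_div, hpow, ← Real.exp_add, one_pow]
      gcongr
      rw [Real.exp_le_one_iff]
      push_cast
      have : 0 ≤ (k : ℝ) * Real.log d := by positivity
      nlinarith
    refine this.trans ?_
    unfold ww
    have : 0 ≤ (1 / 2 : ℝ) ^ k * Real.exp (8 * Real.exp 1) := by positivity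
    linarith
  · have hE : (d : ℝ) ^ (2 * k) / k.factorial * Real.exp (- (3 * (1 / 2 * k) * Real.log d))
        = Real.exp (k / 2 * Real.log d) / k.factorial := by
      rw [div_mul_eq_mul_div, hpow, ← Real.exp_add]
      congr 2
      push_cast
      ring
    rw [hE]
    have hsq : (Real.exp (k / 2 * Real.log d) / k.factorial) ^ 2 ≤
        ((1 / 2) ^ k * Real.exp (8 * Real.exp 1)) ^ 2 := by
      have h1 : (Real.exp (k / 2 * Real.log d)) ^ 2 = (d : ℝ) ^ k := by
        rw [hpow, ← Real.exp_nat_mul]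
        congr 1
        push_cast
        ring
      have h2 : (d : ℝ) ^ k ≤ (4 * k) ^ k := by
        gcongr
        exact_mod_cast (by omega : d ≤ 4 * k)
      have h3 : (k : ℝ) ^ k ≤ Real.exp 1 ^ k * k.factorial := by
        have := Real.pow_div_factorial_le_exp (k : ℝ) (by positivity) k
        rw [div_le_iff₀ hk0] at this
        rwa [← Real.exp_nat_mul, mul_one]
      have h4 : (16 * Real.exp 1) ^ k ≤ Real.exp (16 * Real.exp 1) * k.factorial := by
        have := Real.pow_div_factorial_le_exp (16 * Real.exp 1) (by positivity) k
        rwa [div_le_iff₀ hk0] at this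
      have h5 : (Real.exp (8 * Real.exp 1)) ^ 2 = Real.exp (16 * Real.exp 1) := by
        rw [← Real.exp_nat_mul]
        congr 1
        push_cast
        ring
      rw [div_pow, h1, mul_pow, h5, div_le_iff₀ (by positivity)]
      have h6 : (1 / 2 : ℝ) ^ k * (1 / 2 : ℝ) ^ k * (16 : ℝ) ^ k = 4 ^ k := by
        rw [← mul_pow, ← mul_pow]; norm_num
      calc (d : ℝ) ^ k ≤ 4 ^ k * k ^ k := by rw [← mul_pow]; exact h2
        _ ≤ 4 ^ k * (Real.exp 1 ^ k * k.factorial) := by gcongr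
        _ = (1 / 2 : ℝ) ^ k * (1 / 2 : ℝ) ^ k * ((16 * Real.exp 1) ^ k) * k.factorial := by
            rw [mul_pow, ← h6]; ring
        _ ≤ (1 / 2 : ℝ) ^ k * (1 / 2 : ℝ) ^ k *
              (Real.exp (16 * Real.exp 1) * k.factorial) * k.factorial := by gcongr
        _ = _ := by ring
    have hle := le_of_sq_le_sq hsq (by positivity)
    refine hle.trans ?_
    unfold ww
    have : 0 ≤ 1 ^ k / (k.factorial : ℝ) := by positivity
    linarith

lemma term_le {T l : ℕ} (hl1 : 1 ≤ l) (hl : l + 1 ≤ d)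
    (hT : 3 * (d : ℝ) * Real.log d ≤ T) :
    d.factorial * (Real.exp (- (rate d (d - l)) / d) ^ T * (d.choose l / l.factorial)) ≤
      ww (d - l) * (d * Real.exp (- (T : ℝ) / (3 * d))) := by
  obtain ⟨k, hk⟩ : ∃ k, d = l + k := ⟨d - l, by omega⟩
  have hkk : d - l = k := by omega
  rw [hkk]
  have hdR : (1 : ℝ) ≤ d := by exact_mod_cast (by omega : 1 ≤ d)
  have hd0 : (0 : ℝ) < d := by linarith
  have hlog : 0 ≤ Real.log d := Real.log_nonneg hdR
  have hk1 : (1 : ℝ) ≤ k := by exact_mod_cast (by omega : 1 ≤ k)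
  have hrate : 1 / 3 ≤ rate d k := by unfold rate; split_ifs <;> linarith
  have h1 : (d.factorial : ℝ) / l.factorial ≤ (d : ℝ) ^ k := by
    rw [div_le_iff₀ (by positivity)]
    have a := Nat.factorial_mul_descFactorial (n := d) (k := k) (by omega)
    have b := Nat.descFactorial_le_pow d k
    rw [show d - k = l by omega] at a
    rw [← a]
    push_cast
    rw [mul_comm]
    gcongr
    exact_mod_cast b
  have h2 : (d.choose l : ℝ) ≤ (d : ℝ) ^ k / k.factorial := by
    rw [← Nat.choose_symm (by omega : l ≤ d), hkk]
    exact Nat.choose_le_pow_div k d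
  have h3 : Real.exp (- (rate d k) / d) ^ T ≤
      Real.exp (- (3 * rate d k * Real.log d)) * (d * Real.exp (- (T : ℝ) / (3 * d))) := by
    have hde : (d : ℝ) * Real.exp (- (T : ℝ) / (3 * d)) =
        Real.exp (Real.log d + - (T : ℝ) / (3 * d)) := by
      rw [Real.exp_add, Real.exp_log hd0]
    rw [hde, ← Real.exp_nat_mul, ← Real.exp_add, Real.exp_le_exp]
    have hT' : 3 * Real.log d ≤ T / d := by rw [le_div_iff₀ hd0]; linarith
    have e1 : (T : ℝ) * (- (rate d k) / d) = - (rate d k) * (T / d) := by ring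
    have e2 : - (T : ℝ) / (3 * d) = - (1 / 3) * (T / d) := by field_simp
    rw [e1, e2]
    nlinarith
  calc _ = (d.factorial : ℝ) / l.factorial * d.choose l * Real.exp (- (rate d k) / d) ^ T := by ring
    _ ≤ (d : ℝ) ^ k * ((d : ℝ) ^ k / k.factorial) *
        (Real.exp (- (3 * rate d k * Real.log d)) * (d * Real.exp (- (T : ℝ) / (3 * d)))) := by
        gcongr
    _ = ((d : ℝ) ^ (2 * k) / k.factorial * Real.exp (- (3 * rate d k * Real.log d))) *
        (d * Real.exp (- (T : ℝ) / (3 * d))) := by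
        rw [two_mul, pow_add]; ring
    _ ≤ _ := by
        gcongr
        exact term_aux (by omega)

lemma sum_bound {T : ℕ} (hd : 2 ≤ d) (hT : 3 * (d : ℝ) * Real.log d ≤ T) :
    avgTV d T ^ 2 ≤ (∑' k, ww k) * (d * Real.exp (- (T : ℝ) / (3 * d))) := by
  refine (avg_sq hd T).trans ?_
  calc _ ≤ ∑ l ∈ Finset.Icc 1 (d - 1), ww (d - l) * (d * Real.exp (- (T : ℝ) / (3 * d))) := by
        refine Finset.sum_le_sum fun l hl => ?_
        rw [Finset.mem_Icc] at hl
        exact term_le hl.1 (by omega) hT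
    _ = (∑ k ∈ (Finset.Icc 1 (d - 1)).image (fun l => d - l), ww k) *
          (d * Real.exp (- (T : ℝ) / (3 * d))) := by
        rw [← Finset.sum_mul, Finset.sum_image]
        intro a ha b hb hab
        simp only [Finset.coe_Icc, Set.mem_Icc] at ha hb
        simp only at hab
        omega
    _ ≤ _ := by
        gcongr
        exact ww_summable.sum_le_tsum _ fun k _ => ww_nonneg k

end final

end helpers

/-- **Lemma B.1**: products of random transpositions with Bernoulli exponents mix to the
uniform distribution on the symmetric group. -/
theorem random_signed_transposition_mixing :
    ∃ C : ℝ, 0 < C ∧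
      ∀ d T : ℕ, 10 ≤ d → 1 ≤ T →
      avgTV d T ≤
        C * ((d : ℝ) ^ ((1 : ℝ) / 2) * Real.exp (-(T : ℝ) / (6 * d)) +
          ((d.factorial : ℝ)) ^ ((1 : ℝ) / 2) *
            ((Real.sqrt 5 - 1) / 2) ^ ((T : ℝ) / 2)) := by
  have hA : 0 ≤ ∑' k, ww k := tsum_nonneg ww_nonneg
  refine ⟨2 + Real.sqrt (∑' k, ww k), by positivity, ?_⟩
  intro d T hd hT1
  have hs5 : (0 : ℝ) ≤ (Real.sqrt 5 - 1) / 2 := by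
    have : (1 : ℝ) ≤ Real.sqrt 5 := Real.one_le_sqrt.2 (by norm_num)
    linarith
  have hsecond : (0 : ℝ) ≤ ((d.factorial : ℝ)) ^ ((1 : ℝ) / 2) *
            ((Real.sqrt 5 - 1) / 2) ^ ((T : ℝ) / 2) := by positivity
  have hd0 : (0 : ℝ) < d := by exact_mod_cast (by omega : 0 < d)
  set X := (d : ℝ) ^ ((1 : ℝ) / 2) * Real.exp (-(T : ℝ) / (6 * d)) with hX
  have hX0 : 0 ≤ X := by positivity
  suffices h : avgTV d T ≤ (2 + Real.sqrt (∑' k, ww k)) * X by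
    refine h.trans ?_
    gcongr
    linarith
  have hX2 : X ^ 2 = d * Real.exp (- (T : ℝ) / (3 * d)) := by
    rw [hX, mul_pow, ← Real.exp_nat_mul, ← Real.rpow_natCast, ← Real.rpow_mul hd0.le]
    norm_num
    field_simp
    norm_num
  rcases le_total (3 * (d : ℝ) * Real.log d) T with hT | hT
  · have h1 := sum_bound (d := d) (T := T) (by omega) hT
    rw [← hX2] at h1
    have h2 : avgTV d T ^ 2 ≤ (Real.sqrt (∑' k, ww k) * X) ^ 2 := by
      rw [mul_pow, Real.sq_sqrt hA]; exact h1
    have h3 := le_of_sq_le_sq h2 (by positivity)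
    linarith
  · have h1 : 1 ≤ X := by
      rw [hX, Real.rpow_def_of_pos hd0, ← Real.exp_add]
      rw [Real.one_le_exp_iff]
      have : (T : ℝ) / (6 * d) ≤ Real.log d * (1 / 2) := by
        rw [div_le_iff₀ (by positivity)]
        linarith
      rw [neg_div]
      linarith
    have h2 := avg_le_two (d := d) (by omega) T
    have h3 : 0 ≤ Real.sqrt (∑' k, ww k) * X := by positivity
    linarith

end KacJL
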